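/- Let K be a Δ-field and L|K a finitely Δ-generated extension of Δ-fields (all of characteristic zero). Then the total ring of fractions M := Quot(L ⊗_K L) is a finite direct product of fields: there exist pairwise orthogonal idempotents e₁,…,e_r ∈ M with e₁ + ⋯ + e_r = 1 such that each eᵢM is a field and M = e₁M ⊕ ⋯ ⊕ e_rM. -/

import Mathlib

open scoped TensorProduct

/-- The derivations `δ₁, …, δ_m` pairwise commute. -/
def CommutingDerivations {R : Type*} [CommRing R] {m : ℕ}
    (δ : Fin m → Derivation ℤ R R) : Prop :=
  ∀ i j x, δ i (δ j x) = δ j (δ i x)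

/-- `L|K` is finitely `Δ`-generated: `L` is generated as a field over `K` by the elements
`θ(a)`, `a ∈ S`, `θ` a monomial in the derivations, for some finite `S ⊆ L`. -/
def FinitelyDeltaGenerated {m : ℕ} (K L : Type*) [Field K] [Field L] [Algebra K L]
    (δL : Fin m → Derivation ℤ L L) : Prop :=
  ∃ S : Finset L, IntermediateField.adjoin K
    {x : L | ∃ a ∈ S, ∃ w : List (Fin m), x = w.foldr (fun i y => δL i y) a} = ⊤

/-! Fix a ranking of the derivatives `δ^α a_j` of a finite set of differential generators of `L|K`,
and call one of them a leader if it is algebraic over its predecessors. Differentiating the minimal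
polynomial of a leader, which is separable, shows that every proper derivative of a leader is
*rational* over its predecessors. By Dickson's lemma, all but finitely many leaders are proper
derivatives of leaders, so `L` is finite over the field `K(x)` generated by the derivatives that
are not leaders. These are algebraically independent, so for every `K`-algebra `R` that is a domain
(such as `R = L`), `D = K(x) ⊗_K R` is a localization of a polynomial ring over `R`, hence a domain.
Now `L ⊗_K R` is finite étale and torsion-free over `D`, so its total ring of fractions is finite
étale over the field `Frac D`, that is, a finite product of fields. -/

open IntermediateField

section Idempotents

/-- The principal ideal `eM`, a ring with unit `e` when `e` is idempotent, is a field.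
Stated through elements of `M`, so that no ring structure on `eM` is needed. -/
def IsFieldCorner {M : Type*} [CommRing M] (e : M) : Prop :=
  e ≠ 0 ∧ ∀ x, e * x ≠ 0 → ∃ y, (e * x) * (e * y) = e

theorem isFieldCorner_single {I : Type*} [DecidableEq I] {R : I → Type*} [∀ i, CommRing (R i)]
    {i : I} (hi : IsField (R i)) : IsFieldCorner (Pi.single i 1 : ∀ i, R i) := by
  have : Nontrivial (R i) := hi.nontrivial
  have single_mul (x : ∀ i, R i) : Pi.single i 1 * x = Pi.single i (x i) := by
    rw [← Pi.single_mul_left, one_mul]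
  refine ⟨by simp, fun x hx => ?_⟩
  simp only [single_mul, ne_eq, Pi.single_eq_zero_iff] at hx ⊢
  obtain ⟨y, hy⟩ := hi.mul_inv_cancel hx
  exact ⟨Pi.single i y, by rw [Pi.single_eq_same, ← Pi.single_mul, hy]⟩

theorem IsFieldCorner.map {M N : Type*} [CommRing M] [CommRing N] {e : M} (he : IsFieldCorner e)
    (f : M ≃+* N) : IsFieldCorner (f e) := by
  refine ⟨(map_ne_zero_iff f f.injective).mpr he.1, fun x hx => ?_⟩
  obtain ⟨x, rfl⟩ := f.surjective x
  rw [← map_mul, map_ne_zero_iff f f.injective] at hx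
  obtain ⟨y, hy⟩ := he.2 x hx
  exact ⟨f y, by rw [← map_mul, ← map_mul, ← map_mul, hy]⟩

theorem exists_completeOrthogonalIdempotents_isFieldCorner (M : Type*) [CommRing M]
    [IsSemisimpleRing M] :
    ∃ (r : ℕ) (e : Fin r → M), CompleteOrthogonalIdempotents e ∧ ∀ i, IsFieldCorner (e i) := by
  classical
  obtain ⟨r, ⟨σ⟩⟩ := Finite.exists_equiv_fin (MaximalSpectrum M)
  let := Fintype.ofFinite (MaximalSpectrum M)
  let E : M ≃+* ∀ I : MaximalSpectrum M, M ⧸ I.asIdeal := (IsArtinianRing.equivPi M).toRingEquiv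
  have single_isFieldCorner (I : MaximalSpectrum M) :
      IsFieldCorner (Pi.single I 1 : ∀ I : MaximalSpectrum M, M ⧸ I.asIdeal) :=
    isFieldCorner_single ((Ideal.Quotient.maximal_ideal_iff_isField_quotient _).mp I.isMaximal)
  exact ⟨r, _,
    (CompleteOrthogonalIdempotents.equiv σ.symm).mpr
      ((CompleteOrthogonalIdempotents.single _).map E.symm.toRingHom),
    fun i => (single_isFieldCorner (σ.symm i)).map E.symm⟩

end Idempotents

section TensorProduct

theorem isFractionRing_of_isLocalization_of_isArtinianRing {R A : Type*} [CommRing R]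
    [CommRing A] [Algebra R A] (W : Submonoid R) (hW : W ≤ nonZeroDivisors R)
    [IsLocalization W A] [IsArtinianRing A] : IsFractionRing R A :=
  IsLocalization.of_le W _ hW fun _ hr =>
    IsArtinianRing.isUnit_of_mem_nonZeroDivisors (IsLocalization.nonZeroDivisors_le_comap W A hr)

section

attribute [local instance] Algebra.TensorProduct.rightAlgebra

theorem isSemisimpleRing_fractionRing_tensorProduct (k D E : Type*) [Field k] [CommRing D]
    [IsDomain D] [Algebra k D] [CommRing E] [Algebra k E] [Module.Finite k E]
    [Algebra.FormallyUnramified k E] : IsSemisimpleRing (FractionRing (D ⊗[k] E)) := by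
  let F := FractionRing D
  let A := F ⊗[D] (D ⊗[k] E)
  have : IsArtinianRing A := .of_finite F A
  have : IsReduced A := Algebra.FormallyUnramified.isReduced_of_field F A
  have : IsSemisimpleRing A := IsArtinianRing.isSemisimpleRing_of_isReduced A
  let W := Algebra.algebraMapSubmonoid (D ⊗[k] E) (nonZeroDivisors D)
  have hW : W ≤ nonZeroDivisors (D ⊗[k] E) := by
    rintro _ ⟨d, hd, rfl⟩
    refine mem_nonZeroDivisors_iff_right.mpr fun z hz => ?_
    rw [mul_comm, ← Algebra.smul_def] at hz
    exact (smul_eq_zero.mp hz).resolve_left (nonZeroDivisors.ne_zero hd)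
  have : IsFractionRing (D ⊗[k] E) A :=
    isFractionRing_of_isLocalization_of_isArtinianRing W hW
  exact (FractionRing.algEquiv (D ⊗[k] E) A).symm.toRingEquiv.isSemisimpleRing

theorem isDomain_tensorProduct_of_isFractionRing (K B k R : Type*) [Field K] [CommRing B]
    [Algebra K B] [Field k] [Algebra K k] [Algebra B k] [IsScalarTower K B k] [IsFractionRing B k]
    [CommRing R] [Algebra K R] [IsDomain (B ⊗[K] R)] : IsDomain (k ⊗[K] R) := by
  have : Nontrivial R :=
    (Algebra.TensorProduct.includeRight : R →ₐ[K] B ⊗[K] R).toRingHom.domain_nontrivial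
  have : IsDomain (k ⊗[B] (B ⊗[K] R)) := by
    refine IsLocalization.isDomain_of_le_nonZeroDivisors (R := B ⊗[K] R)
      (M := Algebra.algebraMapSubmonoid (B ⊗[K] R) (nonZeroDivisors B)) _ ?_
    have : FaithfulSMul B (B ⊗[K] R) := (faithfulSMul_iff_algebraMap_injective _ _).mpr <|
      Algebra.TensorProduct.includeLeft_injective (S := B) (algebraMap K R).injective
    exact algebraMapSubmonoid_le_nonZeroDivisors_of_faithfulSMul _ le_rfl
  exact (Algebra.TensorProduct.cancelBaseChange K B B k R).symm.toMulEquiv.isDomain _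

end

open scoped IntermediateField.algebraAdjoinAdjoin in
theorem isDomain_adjoin_tensorProduct {ι K L : Type*} [Field K] [Field L] [Algebra K L]
    {x : ι → L} (hx : AlgebraicIndependent K x) (R : Type*) [CommRing R] [IsDomain R]
    [Algebra K R] : IsDomain (adjoin K (Set.range x) ⊗[K] R) := by
  let B := Algebra.adjoin K (Set.range x)
  let e : B ⊗[K] R ≃+* MvPolynomial ι R :=
    ((Algebra.TensorProduct.congr hx.aevalEquiv.symm AlgEquiv.refl).trans
      (Algebra.TensorProduct.comm K _ _)).toRingEquiv.trans
      (MvPolynomial.algebraTensorAlgEquiv K R).toRingEquiv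
  have : IsDomain (B ⊗[K] R) := e.toMulEquiv.isDomain _
  exact isDomain_tensorProduct_of_isFractionRing K B _ R

theorem isSemisimpleRing_fractionRing_tensorProduct_of_isDomain (K k E R : Type*) [Field K]
    [Field k] [Algebra K k] [CommRing E] [Algebra K E] [Algebra k E] [IsScalarTower K k E]
    [Module.Finite k E] [Algebra.FormallyUnramified k E] [CommRing R] [Algebra K R]
    [IsDomain (k ⊗[K] R)] : IsSemisimpleRing (FractionRing (E ⊗[K] R)) := by
  have : IsSemisimpleRing (FractionRing ((k ⊗[K] R) ⊗[k] E)) :=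
    isSemisimpleRing_fractionRing_tensorProduct k (k ⊗[K] R) E
  let e : (k ⊗[K] R) ⊗[k] E ≃+* E ⊗[K] R :=
    (Algebra.TensorProduct.comm k _ _).toRingEquiv.trans
      (Algebra.TensorProduct.cancelBaseChange K k k E R).toRingEquiv
  let e' : FractionRing ((k ⊗[K] R) ⊗[k] E) ≃+* FractionRing (E ⊗[K] R) :=
    IsFractionRing.ringEquivOfRingEquiv e
  exact e'.isSemisimpleRing

theorem isSemisimpleRing_fractionRing_tensorProduct_of_algebraicIndependent {ι K L : Type*}
    [Field K] [Field L] [Algebra K L] {x : ι → L} (hx : AlgebraicIndependent K x)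
    [FiniteDimensional (adjoin K (Set.range x)) L]
    [Algebra.IsSeparable (adjoin K (Set.range x)) L] (R : Type*) [CommRing R] [IsDomain R]
    [Algebra K R] : IsSemisimpleRing (FractionRing (L ⊗[K] R)) := by
  have : IsDomain (adjoin K (Set.range x) ⊗[K] R) := isDomain_adjoin_tensorProduct hx R
  have : Algebra.FormallyEtale (adjoin K (Set.range x)) L := .of_isSeparable _ _
  exact isSemisimpleRing_fractionRing_tensorProduct_of_isDomain K (adjoin K (Set.range x)) L R

end TensorProduct

section Derivation

variable {K L : Type*} [Field K] [Field L] [Algebra K L]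

theorem derivation_apply_mem_of_mem_adjoin {F : IntermediateField K L} {d : Derivation ℤ L L}
    (hK : ∀ a, d (algebraMap K L a) ∈ F) {s : Set L} (hs : s ⊆ F) (hds : ∀ x ∈ s, d x ∈ F)
    {x : L} (hx : x ∈ adjoin K s) : d x ∈ F := by
  have adjoin_le : adjoin K s ≤ F := adjoin_le_iff.mpr hs
  induction hx using adjoin_induction with
  | mem x hx => exact hds x hx
  | algebraMap a => exact hK a
  | add x y _ _ hx hy => exact map_add d x y ▸ add_mem hx hy
  | inv x hxs hx =>
    rw [Derivation.leibniz_inv]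
    exact mul_mem (neg_mem (pow_mem (inv_mem (adjoin_le hxs)) 2)) hx
  | mul x y hxs hys hx hy =>
    rw [Derivation.leibniz]
    exact add_mem (mul_mem (adjoin_le hxs) hy) (mul_mem (adjoin_le hys) hx)

/- Differentiating `p y = 0`, for `p` the minimal polynomial, gives `pᵈ y + p' y * d y = 0`, where
`pᵈ` has coefficients in `F` and `p' y ≠ 0`. -/
theorem derivation_apply_mem_of_isSeparable {F : IntermediateField K L} {d : Derivation ℤ L L}
    (hK : ∀ a, d (algebraMap K L a) ∈ F) {y : L} (hy : y ∈ F) (hsep : IsSeparable K y) :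
    d y ∈ F := by
  have aeval_mem (p : Polynomial K) : Polynomial.aeval y p ∈ F :=
    aeval_coe F (⟨y, hy⟩ : F) p ▸ (Polynomial.aeval (⟨y, hy⟩ : F) p).2
  have sub_mem (p : Polynomial K) :
      d (Polynomial.aeval y p) - Polynomial.aeval y p.derivative * d y ∈ F := by
    induction p using Polynomial.induction_on' with
    | add p q hp hq =>
      simpa only [map_add, add_mul, add_sub_add_comm] using add_mem hp hq
    | monomial n a =>
      simp only [Polynomial.derivative_monomial, Polynomial.aeval_monomial, Derivation.leibniz,
        Derivation.leibniz_pow, smul_eq_mul, map_mul, map_natCast, nsmul_eq_mul]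
      convert mul_mem (pow_mem hy n) (hK a) using 1
      ring
  have derivative_ne_zero : Polynomial.aeval y (minpoly K y).derivative ≠ 0 :=
    hsep.aeval_derivative_ne_zero (minpoly.aeval K y)
  have mul_mem_F : Polynomial.aeval y (minpoly K y).derivative * d y ∈ F := by
    simpa using sub_mem (minpoly K y)
  simpa [derivative_ne_zero] using mul_mem (inv_mem (aeval_mem (minpoly K y).derivative)) mul_mem_F

end Derivation

section Leaders

variable {I K L : Type*} [LinearOrder I] [Field K] [Field L] [Algebra K L]

variable (K) in
/-- The subfield generated over `K` by the members of the family `v` that precede `v i`. -/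
def initialField (v : I → L) (i : I) : IntermediateField K L :=
  adjoin K (v '' Set.Iio i)

variable (K) in
/-- The indices at which the family `v` is algebraic over its predecessors. For the derivatives of
differential indeterminates modulo a prime differential ideal, ordered by a ranking, these are the
leaders of the elements of the ideal. -/
def leaders (v : I → L) : Set I :=
  {i | IsAlgebraic (initialField K v i) (v i)}

theorem initialField_le_iff {v : I → L} {i : I} {F : IntermediateField K L} :
    initialField K v i ≤ F ↔ ∀ j < i, v j ∈ F := by
  simp [initialField, adjoin_le_iff, Set.subset_def]

theorem mem_initialField_of_lt {v : I → L} {i j : I} (hji : j < i) : v j ∈ initialField K v i :=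
  subset_adjoin _ _ ⟨j, hji, rfl⟩

theorem algebraicIndepOn_compl_leaders (v : I → L) : AlgebraicIndepOn K v (leaders K v)ᶜ := by
  classical
  refine algebraicIndependent_of_finite_type fun t ht => ?_
  change AlgebraicIndepOn K (fun i : ↥(leaders K v)ᶜ => v i) t
  obtain ⟨s, rfl⟩ := ht.exists_finset_coe
  clear ht
  induction s using Finset.induction_on_max with
  | empty =>
    rw [Finset.coe_empty]
    exact algebraicIndependent_empty_type_iff.mpr (algebraMap K L).injective
  | insert i s lt_i ih =>
    rw [Finset.coe_insert]
    have adjoin_le : Algebra.adjoin K ((fun i : ↥(leaders K v)ᶜ => v i) '' (s : Set _)) ≤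
        (initialField K v i).toSubalgebra := by
      rw [Algebra.adjoin_le_iff]
      rintro _ ⟨j, hj, rfl⟩
      exact mem_initialField_of_lt (lt_i j hj)
    exact ih.insert (Transcendental.of_tower_top_of_subalgebra_le adjoin_le i.2)

theorem apply_mem_initialField_of_mem_leaders [CharZero L] {d : Derivation ℤ L L}
    (hK : ∀ a, d (algebraMap K L a) ∈ Set.range (algebraMap K L)) {v : I → L} {f : I → I}
    (hf : StrictMono f) (hlt : ∀ i, i < f i) (hv : ∀ i, v (f i) = d (v i)) {i : I}
    (hi : i ∈ leaders K v) : v (f i) ∈ initialField K v (f i) := by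
  have initialField_le : initialField K v i ≤ initialField K v (f i) :=
    initialField_le_iff.mpr fun j hj => mem_initialField_of_lt (hj.trans (hlt i))
  have derivation_mem (x : initialField K v i) : d x ∈ initialField K v (f i) := by
    refine derivation_apply_mem_of_mem_adjoin (fun a => ?_)
      ((subset_adjoin _ _).trans initialField_le) ?_ x.2
    · obtain ⟨b, hb⟩ := hK a
      exact hb ▸ (initialField K v (f i)).algebraMap_mem b
    · rintro _ ⟨j, hj, rfl⟩
      exact hv j ▸ mem_initialField_of_lt (hf hj)
  have : CharZero (initialField K v i) := (algebraMap _ L).charZero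
  rw [hv, ← mem_extendScalars initialField_le]
  exact derivation_apply_mem_of_isSeparable
    (fun a => (mem_extendScalars _).mpr (derivation_mem a))
    ((mem_extendScalars _).mpr (mem_initialField_of_lt (hlt i)))
    (minpoly.irreducible hi.isIntegral).separable

variable [WellFoundedLT I]

theorem isAlgebraic_adjoin_compl_leaders (v : I → L) (i : I) :
    IsAlgebraic (adjoin K (v '' (leaders K v)ᶜ)) (v i) := by
  set k := adjoin K (v '' (leaders K v)ᶜ)
  rw [← mem_algebraicClosure_iff]
  induction i using WellFoundedLT.induction with
  | ind i ih =>
    by_cases hi : i ∈ leaders K v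
    · have initialField_le : initialField K v i ≤ (algebraicClosure k L).restrictScalars K :=
        initialField_le_iff.mpr ih
      have : IsAlgebraic (algebraicClosure k L) (v i) :=
        IsAlgebraic.tower_top_of_subalgebra_le
          (B := ((algebraicClosure k L).restrictScalars K).toSubalgebra) initialField_le hi
      exact mem_algebraicClosure_iff.mpr (this.restrictScalars k)
    · exact (algebraicClosure k L).algebraMap_mem ⟨v i, subset_adjoin _ _ ⟨i, hi, rfl⟩⟩

theorem mem_adjoin_compl_leaders_union {v : I → L} {s : Set I}
    (hs : ∀ i ∈ leaders K v \ s, v i ∈ initialField K v i) (i : I) :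
    v i ∈ adjoin K (v '' (leaders K v)ᶜ ∪ v '' s) := by
  induction i using WellFoundedLT.induction with
  | ind i ih =>
    by_cases hi : i ∈ leaders K v \ s
    · exact initialField_le_iff.mpr ih (hs i hi)
    · rw [Set.mem_sdiff, not_and_or, not_not] at hi
      exact subset_adjoin _ _ (hi.imp (⟨i, ·, rfl⟩) (⟨i, ·, rfl⟩))

theorem finiteDimensional_adjoin_compl_leaders {v : I → L} (hv : adjoin K (Set.range v) = ⊤)
    {s : Set I} (hfin : s.Finite) (hs : ∀ i ∈ leaders K v \ s, v i ∈ initialField K v i) :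
    FiniteDimensional (adjoin K (v '' (leaders K v)ᶜ)) L := by
  set k := adjoin K (v '' (leaders K v)ᶜ)
  have adjoin_eq_top : adjoin k (v '' s) = ⊤ := by
    rw [← restrictScalars_eq_top_iff (K := K), adjoin_adjoin_left, eq_top_iff, ← hv, adjoin_le_iff]
    rintro _ ⟨i, rfl⟩
    exact mem_adjoin_compl_leaders_union hs i
  have : Finite (v '' s) := (hfin.image v).to_subtype
  have : FiniteDimensional k (adjoin k (v '' s)) := finiteDimensional_adjoin <| by
    rintro _ ⟨i, -, rfl⟩
    exact (isAlgebraic_adjoin_compl_leaders v i).isIntegral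
  rw [adjoin_eq_top] at this
  exact Module.Finite.equiv (topEquiv (F := k) (E := L)).toLinearEquiv

end Leaders

section Derivatives

theorem exists_single_add_of_lt {σ : Type*} {α β : σ →₀ ℕ} (h : α < β) :
    ∃ i γ, β = Finsupp.single i 1 + γ ∧ α ≤ γ := by
  obtain ⟨η, rfl⟩ := exists_add_of_le h.le
  obtain ⟨i, hi⟩ := Finsupp.ne_iff.mp (pos_of_lt_add_right h).ne'
  obtain ⟨ζ, rfl⟩ := exists_add_of_le
    (Finsupp.single_le_iff.mpr (Nat.one_le_iff_ne_zero.mpr hi))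
  exact ⟨i, α + ζ, add_left_comm _ _ _, le_self_add⟩

theorem isUpperSet_of_single_add_mem {σ : Type*} {A : Set (σ →₀ ℕ)}
    (hA : ∀ i, ∀ α ∈ A, Finsupp.single i 1 + α ∈ A) : IsUpperSet A := by
  intro α β hle hα
  obtain ⟨γ, rfl⟩ := exists_add_of_le hle
  induction γ using WellFoundedLT.induction with
  | ind γ ih =>
    obtain rfl | hγ := eq_zero_or_pos γ
    · rwa [add_zero]
    · obtain ⟨i, ζ, rfl, -⟩ := exists_single_add_of_lt hγ
      rw [add_left_comm]
      exact hA i _ (ih ζ (lt_add_of_pos_left ζ (by simp [pos_iff_ne_zero])) le_self_add)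

/- Dickson's lemma: the set is contained in the antichain of minimal elements of `A`. -/
theorem finite_sdiff_iUnion_single_add {σ : Type*} [Finite σ] {A : Set (σ →₀ ℕ)}
    (hA : ∀ i, ∀ α ∈ A, Finsupp.single i 1 + α ∈ A) :
    (A \ ⋃ i, (Finsupp.single i 1 + ·) '' A).Finite := by
  refine (WellQuasiOrderedLE.finite_of_isAntichain
    (setOfPred_minimal_antichain (· ∈ A))).subset fun α hα => ⟨hα.1, fun β hβ hle => ?_⟩
  by_contra hlt
  obtain ⟨i, γ, rfl, hγ⟩ := exists_single_add_of_lt (hle.lt_of_not_ge hlt)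
  exact hα.2 (Set.mem_iUnion.mpr ⟨i, γ, isUpperSet_of_single_add_mem hA hγ hβ, rfl⟩)

/-- The index `(α, j)` stands for the derivative `δ^α a_j` of the `j`-th of `n` elements. The
lexicographic order on these pairs is a ranking: a well-order compatible with the derivations. -/
abbrev DerivIndex (m n : ℕ) : Type :=
  Lex (Fin m →₀ ℕ) ×ₗ Fin n

namespace DerivIndex

variable {m n : ℕ}

/-- The index `(α + e_i, j)` of the derivative of `δ^α a_j` with respect to `δ_i`. -/
noncomputable def shift (i : Fin m) (p : DerivIndex m n) : DerivIndex m n :=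
  toLex (toLex (Finsupp.single i 1) + (ofLex p).1, (ofLex p).2)

theorem shift_strictMono (i : Fin m) : StrictMono (shift (n := n) i) := by
  intro p q hpq
  simpa [Prod.Lex.lt_iff, shift] using hpq

theorem lt_shift (i : Fin m) (p : DerivIndex m n) : p < shift i p := by
  have single_pos : 0 < toLex (Finsupp.single i 1) := by simp [pos_iff_ne_zero]
  exact Prod.Lex.lt_iff.mpr (.inl (lt_add_of_pos_left _ single_pos))

theorem finite_sdiff_iUnion_shift {A : Set (DerivIndex m n)} (hA : ∀ i, ∀ p ∈ A, shift i p ∈ A) :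
    (A \ ⋃ i, shift i '' A).Finite := by
  let index (j : Fin n) (α : Fin m →₀ ℕ) : DerivIndex m n := toLex (toLex α, j)
  have fiber_finite (j : Fin n) := finite_sdiff_iUnion_single_add (A := index j ⁻¹' A)
    fun i α hα => hA i (index j α) hα
  refine (Set.finite_iUnion fun j => (fiber_finite j).image (index j)).subset ?_
  rintro p ⟨hp, hshift⟩
  refine Set.mem_iUnion.mpr ⟨(ofLex p).2, ofLex (ofLex p).1, ⟨hp, fun hmem => hshift ?_⟩, rfl⟩
  obtain ⟨i, α, hα, h⟩ := Set.mem_iUnion.mp hmem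
  exact Set.mem_iUnion.mpr ⟨i, index _ α, hα, congrArg (index (ofLex p).2) h⟩

end DerivIndex

section

variable {R : Type*} [CommRing R] {m n : ℕ} {δ : Fin m → Derivation ℤ R R}

theorem CommutingDerivations.leftCommutative (hδ : CommutingDerivations δ) :
    LeftCommutative fun i x => δ i x :=
  ⟨hδ⟩

/-- The family of all derivatives `δ^α a_j` of a finite family `a`. The order in which the
derivations are applied does not matter, so the multi-index `α` is read as a multiset. -/
noncomputable def derivatives (hδ : CommutingDerivations δ) (a : Fin n → R)
    (p : DerivIndex m n) : R :=
  have := hδ.leftCommutative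
  (Finsupp.toMultiset (ofLex (ofLex p).1)).foldr (fun i x => δ i x) (a (ofLex p).2)

theorem derivatives_shift (hδ : CommutingDerivations δ) (a : Fin n → R) (i : Fin m)
    (p : DerivIndex m n) : derivatives hδ a (p.shift i) = δ i (derivatives hδ a p) := by
  simp [derivatives, DerivIndex.shift]

end

variable {K L : Type*} [Field K] [Field L] [Algebra K L] {m : ℕ} {δL : Fin m → Derivation ℤ L L}

theorem FinitelyDeltaGenerated.exists_adjoin_range_derivatives_eq_top
    (hfg : FinitelyDeltaGenerated K L δL) (hcL : CommutingDerivations δL) :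
    ∃ (n : ℕ) (a : Fin n → L), adjoin K (Set.range (derivatives hcL a)) = ⊤ := by
  obtain ⟨S, hS⟩ := hfg
  refine ⟨S.card, fun j => S.equivFin.symm j, eq_top_iff.mpr (hS ▸ adjoin.mono _ _ _ ?_)⟩
  rintro _ ⟨b, hb, w, rfl⟩
  exact ⟨toLex (toLex (Multiset.toFinsupp (w : Multiset (Fin m))), S.equivFin ⟨b, hb⟩),
    by simp [derivatives]⟩

theorem exists_algebraicIndependent_finiteDimensional_adjoin [CharZero L]
    (hK : ∀ i a, δL i (algebraMap K L a) ∈ Set.range (algebraMap K L))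
    (hcL : CommutingDerivations δL) (hfg : FinitelyDeltaGenerated K L δL) :
    ∃ (ι : Type) (x : ι → L), AlgebraicIndependent K x ∧
      FiniteDimensional (adjoin K (Set.range x)) L := by
  obtain ⟨n, a, hv⟩ := hfg.exists_adjoin_range_derivatives_eq_top hcL
  set v := derivatives hcL a
  have shift_mem_initialField (i : Fin m) (p : DerivIndex m n) (hp : p ∈ leaders K v) :
      v (p.shift i) ∈ initialField K v (p.shift i) :=
    apply_mem_initialField_of_mem_leaders (hK i) (DerivIndex.shift_strictMono i)
      (DerivIndex.lt_shift i) (derivatives_shift hcL a i) hp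
  have shift_mem_leaders (i : Fin m) (p : DerivIndex m n) (hp : p ∈ leaders K v) :
      p.shift i ∈ leaders K v :=
    isAlgebraic_algebraMap (⟨_, shift_mem_initialField i p hp⟩ : initialField K v (p.shift i))
  refine ⟨↥(leaders K v)ᶜ, fun p => v p, algebraicIndepOn_compl_leaders v, ?_⟩
  rw [← Set.image_eq_range]
  refine finiteDimensional_adjoin_compl_leaders hv
    (DerivIndex.finite_sdiff_iUnion_shift shift_mem_leaders) fun p hp => ?_
  rw [sdiff_sdiff_right_self] at hp
  obtain ⟨i, q, hq, rfl⟩ := Set.mem_iUnion.mp hp.2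
  exact shift_mem_initialField i q hq

end Derivatives

theorem totalFractionRing_is_finite_product_of_fields_general {m : ℕ} (K L R : Type*) [Field K]
    [Field L] [CharZero L] [Algebra K L] [CommRing R] [IsDomain R] [Algebra K R]
    (δK : Fin m → Derivation ℤ K K) (δL : Fin m → Derivation ℤ L L)
    (hcL : CommutingDerivations δL)
    (hcompat : ∀ i a, δL i (algebraMap K L a) = algebraMap K L (δK i a))
    (hfg : FinitelyDeltaGenerated K L δL) :
    ∃ (r : ℕ) (e : Fin r → FractionRing (L ⊗[K] R)),
      CompleteOrthogonalIdempotents e ∧ ∀ i, IsFieldCorner (e i) := by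
  obtain ⟨ι, x, hx, hfin⟩ := exists_algebraicIndependent_finiteDimensional_adjoin
    (fun i a => ⟨δK i a, (hcompat i a).symm⟩) hcL hfg
  have : CharZero (adjoin K (Set.range x)) := (algebraMap _ L).charZero
  have : IsSemisimpleRing (FractionRing (L ⊗[K] R)) :=
    isSemisimpleRing_fractionRing_tensorProduct_of_algebraicIndependent hx R
  exact exists_completeOrthogonalIdempotents_isFieldCorner _

/-- If `L|K` is a finitely `Δ`-generated extension of `Δ`-fields of
characteristic zero, then the total ring of fractions `M := Quot(L ⊗_K L)` is a finite
direct product of fields: there are pairwise orthogonal idempotents `e₁, …, e_r` summing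
to `1` such that each `eᵢM` is a field (with unit `eᵢ`). -/
theorem totalFractionRing_is_finite_product_of_fields {m : ℕ}
    (K L : Type*) [Field K] [CharZero K] [Field L] [CharZero L] [Algebra K L]
    (δK : Fin m → Derivation ℤ K K) (δL : Fin m → Derivation ℤ L L)
    (hcK : CommutingDerivations δK) (hcL : CommutingDerivations δL)
    (hcompat : ∀ i a, δL i (algebraMap K L a) = algebraMap K L (δK i a))
    (hfg : FinitelyDeltaGenerated K L δL) :
    ∃ (r : ℕ) (e : Fin r → FractionRing (L ⊗[K] L)),
      (∀ i, IsIdempotentElem (e i)) ∧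
      (∀ i j, i ≠ j → e i * e j = 0) ∧
      (∑ i, e i) = 1 ∧
      -- each `eᵢM` is a field: `eᵢ` is a nonzero identity of `eᵢM` and every nonzero
      -- element of `eᵢM` has a multiplicative inverse inside `eᵢM`:
      (∀ i, e i ≠ 0 ∧
        ∀ x : FractionRing (L ⊗[K] L), e i * x ≠ 0 →
          ∃ y : FractionRing (L ⊗[K] L), (e i * x) * (e i * y) = e i) := by
  obtain ⟨r, e, he, hfield⟩ :=
    totalFractionRing_is_finite_product_of_fields_general K L L δK δL hcL hcompat hfg
  exact ⟨r, e, he.idem, fun _ _ hij => he.ortho hij, he.complete, hfield⟩
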